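/- (Proposition: convergence bound for integer influences) Suppose the influence b and all edge weights w_e are positive integers. Then every sequence of asynchronous improvement steps of the opinion game on a graph with n vertices has length at most (4bn + 4·w_max·n²)/δ², where w_max = max_{e∈E} w_e; hence the opinion dynamics with asynchronous updates converges to a Nash equilibrium within that many steps. -/

import Mathlib

open Finset

/-- The recommendation function with threshold λ = 1/2. -/
noncomputable def sRec (x : ℝ) : ℝ :=
  if x < -(1/2 : ℝ) then -1 else if (1/2 : ℝ) < x then 1 else 0

/-- Membership in the opinion grid Θ = {-1, -1+δ, …, 1-δ, 1}. -/
def inGrid (δ x : ℝ) : Prop := |x| ≤ 1 ∧ ∃ k : ℤ, x = k * δ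

/-- Cost to agent `i` of holding opinion `y` when the current profile is `x`.
Non-edges are modelled by weight `0`. -/
noncomputable def cost {n : ℕ} (b : ℝ) (w : Fin n → Fin n → ℝ) (i : Fin n)
    (y : ℝ) (x : Fin n → ℝ) : ℝ :=
  b * (y - sRec (x i)) ^ 2 + ∑ j, w i j * (y - x j) ^ 2

/-- An asynchronous improvement step: a single agent `i` switches to an opinion
`y ∈ Θ` that strictly decreases her cost. -/
def ImprStep {n : ℕ} (δ b : ℝ) (w : Fin n → Fin n → ℝ) (x x' : Fin n → ℝ) : Prop :=
  ∃ i y, inGrid δ y ∧ cost b w i y x < cost b w i (x i) x ∧ x' = Function.update x i y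

/-- A profile is a Nash equilibrium (stable) if every agent's opinion minimizes
her cost over Θ. -/
def NashEq {n : ℕ} (δ b : ℝ) (w : Fin n → Fin n → ℝ) (x : Fin n → ℝ) : Prop :=
  ∀ i y, inGrid δ y → cost b w i (x i) x ≤ cost b w i y x


lemma sRec_best (y z : ℝ) : (y - sRec y) ^ 2 ≤ (y - sRec z) ^ 2 := by
  unfold sRec
  split_ifs <;> nlinarith

lemma sRec_int (z : ℝ) : ∃ k : ℤ, sRec z = k := by
  unfold sRec
  split_ifs
  · exact ⟨-1, by norm_num⟩
  · exact ⟨1, by norm_num⟩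
  · exact ⟨0, by norm_num⟩

lemma sRec_err {y : ℝ} (h : |y| ≤ 1) : (y - sRec y) ^ 2 ≤ 1 := by
  have := abs_le.1 h
  unfold sRec
  split_ifs <;> nlinarith

/-- The potential function. -/
noncomputable def pot {n : ℕ} (b : ℝ) (w : Fin n → Fin n → ℝ) (x : Fin n → ℝ) : ℝ :=
  ∑ i, b * (x i - sRec (x i)) ^ 2 + (1 / 2) * ∑ i, ∑ j, w i j * (x i - x j) ^ 2

lemma pot_nonneg {n : ℕ} {b : ℝ} (hb : 0 < b) {w : Fin n → Fin n → ℝ}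
    (hw : ∀ i j, 0 ≤ w i j) (x : Fin n → ℝ) : 0 ≤ pot b w x := by
  unfold pot
  have h1 : 0 ≤ ∑ i, b * (x i - sRec (x i)) ^ 2 :=
    Finset.sum_nonneg fun i _ => by positivity
  have h2 : 0 ≤ ∑ i, ∑ j, w i j * (x i - x j) ^ 2 :=
    Finset.sum_nonneg fun i _ => Finset.sum_nonneg fun j _ => mul_nonneg (hw i j) (sq_nonneg _)
  linarith

lemma pot_le {n : ℕ} {b : ℝ} (hb : 0 < b) {w : Fin n → Fin n → ℝ}
    (hw : ∀ i j, 0 ≤ w i j) {wmax : ℝ} (hub : ∀ i j, w i j ≤ wmax) (h0 : 0 ≤ wmax)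
    (x : Fin n → ℝ) (hx : ∀ i, |x i| ≤ 1) :
    pot b w x ≤ 4 * b * n + 4 * wmax * n ^ 2 := by
  unfold pot
  have h1 : ∑ i, b * (x i - sRec (x i)) ^ 2 ≤ ∑ _i : Fin n, b :=
    Finset.sum_le_sum fun i _ => by nlinarith [sRec_err (hx i)]
  have h2 : ∑ i, ∑ j, w i j * (x i - x j) ^ 2 ≤ ∑ _i : Fin n, ∑ _j : Fin n, wmax * 4 :=
    Finset.sum_le_sum fun i _ => Finset.sum_le_sum fun j _ => by
      have hi := abs_le.1 (hx i)
      have hj := abs_le.1 (hx j)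
      exact mul_le_mul (hub i j) (by nlinarith) (sq_nonneg _) h0
  simp only [Finset.sum_const, Finset.card_univ, Fintype.card_fin, nsmul_eq_mul] at h1 h2
  have h3 : 0 ≤ (n : ℝ) * b := by positivity
  have h4 : 0 ≤ wmax * (n : ℝ) ^ 2 := by positivity
  nlinarith

lemma pot_update {n : ℕ} (b : ℝ) (w : Fin n → Fin n → ℝ)
    (hsym : ∀ i j, w i j = w j i) (hdiag : ∀ i, w i i = 0) (x : Fin n → ℝ) (i : Fin n) (y : ℝ) :
    pot b w (Function.update x i y) - pot b w x =
      b * (y - sRec y) ^ 2 - b * (x i - sRec (x i)) ^ 2 +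
        ∑ j, w i j * ((y - x j) ^ 2 - (x i - x j) ^ 2) := by
  set x' := Function.update x i y with hx'
  have e1 : ∑ a, b * (x' a - sRec (x' a)) ^ 2 - ∑ a, b * (x a - sRec (x a)) ^ 2 =
      b * (y - sRec y) ^ 2 - b * (x i - sRec (x i)) ^ 2 := by
    rw [← Finset.sum_sub_distrib, Finset.sum_eq_single i]
    · simp [hx']
    · intro a _ ha
      simp [hx', ha]
    · simp
  have e2 : ∑ a, ∑ c, w a c * (x' a - x' c) ^ 2 - ∑ a, ∑ c, w a c * (x a - x c) ^ 2 =
      2 * ∑ j, w i j * ((y - x j) ^ 2 - (x i - x j) ^ 2) := by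
    set E : Fin n → ℝ := fun j => w i j * ((y - x j) ^ 2 - (x i - x j) ^ 2) with hE
    have key : ∀ a c, w a c * (x' a - x' c) ^ 2 - w a c * (x a - x c) ^ 2 =
        (if a = i then E c else 0) + (if c = i then E a else 0) := by
      intro a c
      by_cases ha : a = i <;> by_cases hc : c = i
      · subst ha; subst hc; simp [hE, hdiag]
      · subst ha; simp [hE, hx', hc]; ring
      · subst hc; simp [hE, hx', ha, hsym c a]; ring
      · simp [hx', ha, hc]
    simp only [← Finset.sum_sub_distrib, key, Finset.sum_add_distrib]
    simp [Finset.sum_ite_eq', two_mul]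
  unfold pot
  linarith

lemma cost_int {n : ℕ} {m : ℕ} (hm : 2 ≤ m) {δ : ℝ} (hδ : δ = 1 / m) {b : ℝ}
    {w : Fin n → Fin n → ℝ} (hbInt : ∃ B : ℕ, 0 < B ∧ (B : ℝ) = b)
    (hwInt : ∀ i j, ∃ W : ℕ, (W : ℝ) = w i j) {x : Fin n → ℝ} (hx : ∀ i, inGrid δ (x i))
    (i : Fin n) {y : ℝ} (hy : inGrid δ y) : ∃ z : ℤ, cost b w i y x = z * δ ^ 2 := by
  obtain ⟨B, -, rfl⟩ := hbInt
  choose W hW using hwInt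
  choose k hk using fun i => (hx i).2
  obtain ⟨l, hl⟩ := hy.2
  obtain ⟨s, hs⟩ := sRec_int (x i)
  have hmδ : (m : ℝ) * δ = 1 := by
    have : (m : ℝ) ≠ 0 := by positivity
    rw [hδ]; field_simp
  refine ⟨B * (l - s * m) ^ 2 + ∑ j, W i j * (l - k j) ^ 2, ?_⟩
  unfold cost
  push_cast
  rw [add_mul, Finset.sum_mul, hs]
  congr 1
  · have : y - s = (l - s * m) * δ := by rw [hl, sub_mul, mul_assoc, hmδ, mul_one]
    rw [this]; ring
  · refine Finset.sum_congr rfl fun j _ => ?_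
    rw [hl, hk j, ← hW]; ring

lemma step_decrease {n : ℕ} {m : ℕ} (hm : 2 ≤ m) {δ : ℝ} (hδ : δ = 1 / m) {b : ℝ} (hb : 0 < b)
    {w : Fin n → Fin n → ℝ} (hsym : ∀ i j, w i j = w j i) (hdiag : ∀ i, w i i = 0)
    (hbInt : ∃ B : ℕ, 0 < B ∧ (B : ℝ) = b)
    (hwInt : ∀ i j, ∃ W : ℕ, (W : ℝ) = w i j) {x x' : Fin n → ℝ} (hx : ∀ i, inGrid δ (x i))
    (h : ImprStep δ b w x x') : (∀ i, inGrid δ (x' i)) ∧ pot b w x' + δ ^ 2 ≤ pot b w x := by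
  obtain ⟨i, y, hy, hlt, rfl⟩ := h
  constructor
  · intro j
    by_cases hj : j = i
    · subst hj; simpa using hy
    · simpa [hj] using hx j
  · obtain ⟨z, hz⟩ := cost_int hm hδ hbInt hwInt hx i hy
    obtain ⟨z', hz'⟩ := cost_int hm hδ hbInt hwInt hx i (hx i)
    have hδ2 : 0 < δ ^ 2 := by
      have : 0 < δ := by rw [hδ]; positivity
      positivity
    have hzz : z + 1 ≤ z' := by
      rw [hz, hz'] at hlt
      have := lt_of_mul_lt_mul_right hlt hδ2.le
      exact_mod_cast this
    have hzr : (z : ℝ) + 1 ≤ z' := by exact_mod_cast hzz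
    have h1 : cost b w i y x + δ ^ 2 ≤ cost b w i (x i) x := by
      rw [hz, hz']; nlinarith
    have h2 := pot_update b w hsym hdiag x i y
    have h3 := mul_le_mul_of_nonneg_left (sRec_best y (x i)) hb.le
    unfold cost at h1
    simp only [mul_sub, Finset.sum_sub_distrib] at h2
    linarith

/-- If the influence b and all edge weights are positive integers, every sequence
of asynchronous improvement steps has length at most (4bn + 4·w_max·n²)/δ², and
from any initial profile the asynchronous dynamics reaches a Nash equilibrium
within that many steps. -/
theorem convergence_bound_integer_case
    {n : ℕ} (hn : 2 ≤ n) (m : ℕ) (hm : 2 ≤ m) (δ : ℝ) (hδ : δ = 1 / m)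
    (b : ℝ) (hb : 0 < b) (w : Fin n → Fin n → ℝ)
    (hsym : ∀ i j, w i j = w j i) (hdiag : ∀ i, w i i = 0)
    (hw : ∀ i j, 0 ≤ w i j)
    (hbInt : ∃ B : ℕ, 0 < B ∧ (B : ℝ) = b)
    (hwInt : ∀ i j, ∃ W : ℕ, (W : ℝ) = w i j)
    (wmax : ℝ) (hub : ∀ i j, w i j ≤ wmax) (hatt : ∃ i j, w i j = wmax) :
    (∀ (T : ℕ) (seq : ℕ → (Fin n → ℝ)), (∀ i, inGrid δ (seq 0 i)) →
      (∀ t, t < T → ImprStep δ b w (seq t) (seq (t + 1))) →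
      (T : ℝ) ≤ (4 * b * n + 4 * wmax * n ^ 2) / δ ^ 2) ∧
    (∀ x0 : Fin n → ℝ, (∀ i, inGrid δ (x0 i)) →
      ∃ (T : ℕ) (seq : ℕ → (Fin n → ℝ)),
        (T : ℝ) ≤ (4 * b * n + 4 * wmax * n ^ 2) / δ ^ 2 ∧ seq 0 = x0 ∧
        (∀ t, t < T → ImprStep δ b w (seq t) (seq (t + 1))) ∧
        NashEq δ b w (seq T)) := by
  have h0 : 0 ≤ wmax := by
    obtain ⟨i, j, h⟩ := hatt
    exact h ▸ hw i j
  have hδ2 : 0 < δ ^ 2 := by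
    have : 0 < δ := by rw [hδ]; positivity
    positivity
  have part1 : ∀ (T : ℕ) (seq : ℕ → (Fin n → ℝ)), (∀ i, inGrid δ (seq 0 i)) →
      (∀ t, t < T → ImprStep δ b w (seq t) (seq (t + 1))) →
      (T : ℝ) ≤ (4 * b * n + 4 * wmax * n ^ 2) / δ ^ 2 := by
    intro T seq hg hs
    have key : ∀ t, t ≤ T → (∀ i, inGrid δ (seq t i)) ∧
        pot b w (seq t) + t * δ ^ 2 ≤ pot b w (seq 0) := by
      intro t
      induction t with
      | zero => intro _; exact ⟨hg, by simp⟩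
      | succ t ih =>
        intro ht
        obtain ⟨h1, h2⟩ := ih (by omega)
        obtain ⟨h3, h4⟩ := step_decrease hm hδ hb hsym hdiag hbInt hwInt h1 (hs t (by omega))
        refine ⟨h3, ?_⟩
        push_cast
        linarith
    rw [le_div_iff₀ hδ2]
    have h1 := (key T le_rfl).2
    have h2 := pot_nonneg hb hw (seq T)
    have h3 := pot_le hb hw hub h0 (seq 0) (fun i => (hg i).1)
    linarith
  refine ⟨part1, fun x0 hx0 => ?_⟩
  have hex : ∀ x : Fin n → ℝ, ∃ x', ¬ NashEq δ b w x → ImprStep δ b w x x' := by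
    intro x
    by_cases h : NashEq δ b w x
    · exact ⟨x, fun h' => absurd h h'⟩
    · have h' := h
      unfold NashEq at h'
      push Not at h'
      obtain ⟨i, y, hy, hlt⟩ := h'
      exact ⟨_, fun _ => ⟨i, y, hy, hlt, rfl⟩⟩
  choose f hf using hex
  let seq : ℕ → (Fin n → ℝ) := fun t => f^[t] x0
  have hseq : ∀ t, ¬ NashEq δ b w (seq t) → ImprStep δ b w (seq t) (seq (t + 1)) := by
    intro t ht
    have : seq (t + 1) = f (seq t) := Function.iterate_succ_apply' f t x0
    rw [this]
    exact hf _ ht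
  have hN : ∃ t, NashEq δ b w (seq t) := by
    by_contra hno
    push Not at hno
    obtain ⟨N, hN⟩ := exists_nat_gt ((4 * b * n + 4 * wmax * n ^ 2) / δ ^ 2)
    exact absurd (part1 N seq hx0 fun t _ => hseq t (hno t)) (not_le.2 hN)
  classical
  have hs : ∀ t, t < Nat.find hN → ImprStep δ b w (seq t) (seq (t + 1)) :=
    fun t ht => hseq t (Nat.find_min hN ht)
  exact ⟨Nat.find hN, seq, part1 _ seq hx0 hs, rfl, hs, Nat.find_spec hN⟩
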